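/- Let S > 0, 0 < δ₁ < S, δ₂ > 0, r > 0, κ₀ ≥ 0, M > 0, K ≥ 0, ε₁, ε₂ ≥ 0. Let χ : [0,S] × ∂Ω → [0,∞) be continuous with χ(t,x) = δ₂ for all (t,x) ∈ [δ₁,S] × ∂Ω. Let F₁ : [0,S] × cl(Ω) × ℝ → ℝ be continuous, twice continuously differentiable in the last variable, with F₁(t,x,0) = 0, ∂²_uF₁(t,x,u) ≤ 0 for u ≥ 0, ∂²_uF₁(t,x,u) ≥ 0 for u ≤ 0, and ∂_uF₁(t,x,0) ≤ κ₀; let F₂ : [0,S] × cl(Ω) × ℝ → ℝ be continuous and continuously differentiable in the last variable with F₂(t,x,0) = 0 and |∂_uF₂(t,x,u)| ≤ K for all (t,x) and all |u| ≤ M. For j = 1,2 and each λ ∈ [−r,r], let v_{j,λ}, v⁽¹⁾_{j,λ} : [0,S] × cl(Ω) → ℝ with V_{j,λ}(t,x) := ∂_uF_j(t,x,v_{j,λ}(t,x)), and for j = 1 let also v⁽²⁾_{1,λ} be given, such that: v_{1,λ} is a classical solution of ∂_t v − Δv + F₁(t,x,v) = 0 in (0,S) × Ω with lateral boundary values λχ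 and zero initial values; v⁽¹⁾_{1,λ} is a classical solution of ∂_t u − Δu + V_{1,λ} u = 0 with lateral boundary values χ and zero initial values; v⁽²⁾_{1,λ} is a classical solution of ∂_t u − Δu + V_{1,λ} u = −∂²_uF₁(t,x,v_{1,λ}(t,x)) (v⁽¹⁾_{1,λ}(t,x))² with zero lateral boundary values and zero initial values; v_{j,0} ≡ 0 for j = 1,2; for each (t,x), λ ↦ v_{j,λ}(t,x) is continuous on [−r,r] and differentiable on (−r,r) with derivative v⁽¹⁾_{j,λ}(t,x) depending continuously on λ, and λ ↦ v⁽¹⁾_{1,λ}(t,x) is differentiable on (−r,r) with derivative v⁽²⁾_{1,λ}(t,x). Assume moreover |v_{j,λ}(t,x)| ≤ M and |v⁽¹⁾_{1,λ}(t,x)| ≤ M for all j, λ, (t,x), and that |V_{1,λ}(t,x) − V_{2,λ}(t,x)| ≤ ε₁ and |v⁽¹⁾_{1,λ}(t,x) − v⁽¹⁾_{2,λ}(t,x)| ≤ ε₂ for all λ ∈ (−r,r) and (t,x). Let y be a classical solution of ∂_t y − Δy + κ₀ y = 0 in (0,S) × Ω with lateral boundary values χ and zero initial values, and set a₂ :=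 inf { y(t,x) : (t,x) ∈ [δ₁,S] × cl(Ω) }. Then a₂ > 0 and, for all (t,x) ∈ (δ₁,S) × Ω and all s ∈ [−a₂ r, a₂ r]: |F₁(t,x,s) − F₂(t,x,s)| ≤ 2r(M ε₁ + 2K ε₂). -/

import Mathlib

open Set

namespace Paper

noncomputable section

/-- Time derivative `∂ₜu`. -/
def timeDeriv {n : ℕ} (u : ℝ → (Fin n → ℝ) → ℝ) (t : ℝ) (x : Fin n → ℝ) : ℝ :=
  deriv (fun s => u s x) t

/-- Spatial partial derivative `∂ᵢu`. -/
def spatialDeriv {n : ℕ} (u : ℝ → (Fin n → ℝ) → ℝ) (i : Fin n) (t : ℝ) (x : Fin n → ℝ) : ℝ :=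
  deriv (fun s => u t (Function.update x i s)) (x i)

/-- Second spatial partial derivative `∂ᵢ∂ⱼu`. -/
def spatialDeriv2 {n : ℕ} (u : ℝ → (Fin n → ℝ) → ℝ) (i j : Fin n) (t : ℝ)
    (x : Fin n → ℝ) : ℝ :=
  spatialDeriv (spatialDeriv u j) i t x

/-- Laplacian in the space variables. -/
def laplacian {n : ℕ} (u : ℝ → (Fin n → ℝ) → ℝ) (t : ℝ) (x : Fin n → ℝ) : ℝ :=
  ∑ i, spatialDeriv2 u i i t x

/-- Parabolic regularity: `u` is continuous on `[0,S] × cl Ω`, and `∂ₜu` together with all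
spatial partial derivatives of `u` up to order 2 exist and are continuous on `(0,S) × Ω`. -/
structure ParabolicRegular {n : ℕ} (Ω : Set (Fin n → ℝ)) (S : ℝ)
    (u : ℝ → (Fin n → ℝ) → ℝ) : Prop where
  cont : ContinuousOn (fun p : ℝ × (Fin n → ℝ) => u p.1 p.2) (Icc 0 S ×ˢ closure Ω)
  diff_t : ∀ t ∈ Ioo 0 S, ∀ x ∈ Ω, DifferentiableAt ℝ (fun s => u s x) t
  diff_x : ∀ t ∈ Ioo 0 S, ∀ x ∈ Ω, ∀ i,
    DifferentiableAt ℝ (fun s => u t (Function.update x i s)) (x i)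
  diff_xx : ∀ t ∈ Ioo 0 S, ∀ x ∈ Ω, ∀ i j,
    DifferentiableAt ℝ (fun s => spatialDeriv u j t (Function.update x i s)) (x i)
  cont_t : ContinuousOn (fun p : ℝ × (Fin n → ℝ) => timeDeriv u p.1 p.2) (Ioo 0 S ×ˢ Ω)
  cont_x : ∀ i, ContinuousOn (fun p : ℝ × (Fin n → ℝ) => spatialDeriv u i p.1 p.2)
    (Ioo 0 S ×ˢ Ω)
  cont_xx : ∀ i j, ContinuousOn (fun p : ℝ × (Fin n → ℝ) => spatialDeriv2 u i j p.1 p.2)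
    (Ioo 0 S ×ˢ Ω)

/-- Classical solution of `∂ₜu − Δu + c u = f` in `(0,S) × Ω` with lateral boundary values `g`
and zero initial values. -/
structure IsClassicalSolution {n : ℕ} (Ω : Set (Fin n → ℝ)) (S : ℝ)
    (c f g u : ℝ → (Fin n → ℝ) → ℝ) extends ParabolicRegular Ω S u : Prop where
  eqn : ∀ t ∈ Ioo 0 S, ∀ x ∈ Ω, timeDeriv u t x - laplacian u t x + c t x * u t x = f t x
  lateral : ∀ t ∈ Icc 0 S, ∀ x ∈ frontier Ω, u t x = g t x
  initial : ∀ x ∈ closure Ω, u 0 x = 0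

/-- `∂_u F` for a semilinear term `F(t,x,u)`. -/
def uDeriv {n : ℕ} (F : ℝ → (Fin n → ℝ) → ℝ → ℝ) (t : ℝ) (x : Fin n → ℝ) (u : ℝ) : ℝ :=
  deriv (F t x) u

/-- `∂_u² F`. -/
def uDeriv2 {n : ℕ} (F : ℝ → (Fin n → ℝ) → ℝ → ℝ) : ℝ → (Fin n → ℝ) → ℝ → ℝ :=
  uDeriv (uDeriv F)

/-- `∂_u³ F`. -/
def uDeriv3 {n : ℕ} (F : ℝ → (Fin n → ℝ) → ℝ → ℝ) : ℝ → (Fin n → ℝ) → ℝ → ℝ :=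
  uDeriv (uDeriv2 F)

/-- `∂_u⁴ F`. -/
def uDeriv4 {n : ℕ} (F : ℝ → (Fin n → ℝ) → ℝ → ℝ) : ℝ → (Fin n → ℝ) → ℝ → ℝ :=
  uDeriv (uDeriv3 F)

/-- `∂ₜF` for `F` depending on `(t,x,u)`. -/
def FtDeriv {n : ℕ} (F : ℝ → (Fin n → ℝ) → ℝ → ℝ) (t : ℝ) (x : Fin n → ℝ) (u : ℝ) : ℝ :=
  deriv (fun s => F s x u) t

/-- `∂_{xᵢ}F` for `F` depending on `(t,x,u)`. -/
def FxDeriv {n : ℕ} (F : ℝ → (Fin n → ℝ) → ℝ → ℝ) (i : Fin n) (t : ℝ) (x : Fin n → ℝ)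
    (u : ℝ) : ℝ :=
  deriv (fun s => F t (Function.update x i s) u) (x i)

/-- `F` is continuous on `[0,S] × cl Ω × ℝ` and continuously differentiable in the last
variable. -/
def C1InU {n : ℕ} (Ω : Set (Fin n → ℝ)) (S : ℝ) (F : ℝ → (Fin n → ℝ) → ℝ → ℝ) : Prop :=
  ContinuousOn (fun p : ℝ × (Fin n → ℝ) × ℝ => F p.1 p.2.1 p.2.2)
    (Icc 0 S ×ˢ closure Ω ×ˢ (univ : Set ℝ)) ∧
  (∀ t ∈ Icc 0 S, ∀ x ∈ closure Ω, ∀ u : ℝ, DifferentiableAt ℝ (F t x) u) ∧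
  ContinuousOn (fun p : ℝ × (Fin n → ℝ) × ℝ => uDeriv F p.1 p.2.1 p.2.2)
    (Icc 0 S ×ˢ closure Ω ×ˢ (univ : Set ℝ))

/-- `F` is continuous and twice continuously differentiable in the last variable. -/
def C2InU {n : ℕ} (Ω : Set (Fin n → ℝ)) (S : ℝ) (F : ℝ → (Fin n → ℝ) → ℝ → ℝ) : Prop :=
  C1InU Ω S F ∧
  (∀ t ∈ Icc 0 S, ∀ x ∈ closure Ω, ∀ u : ℝ, DifferentiableAt ℝ (uDeriv F t x) u) ∧
  ContinuousOn (fun p : ℝ × (Fin n → ℝ) × ℝ => uDeriv2 F p.1 p.2.1 p.2.2)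
    (Icc 0 S ×ˢ closure Ω ×ˢ (univ : Set ℝ))

/-- `‖f‖_{W^{1,∞}} ≤ B` on `[0,S] × cl Ω`, stated componentwise: `f`, `∂ₜf` and all `∂ᵢf`
are bounded by `B` in absolute value. -/
def W1infLE {n : ℕ} (Ω : Set (Fin n → ℝ)) (S : ℝ) (f : ℝ → (Fin n → ℝ) → ℝ) (B : ℝ) : Prop :=
  ∀ t ∈ Icc 0 S, ∀ x ∈ closure Ω,
    |f t x| ≤ B ∧ |timeDeriv f t x| ≤ B ∧ ∀ i, |spatialDeriv f i t x| ≤ B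

/-- `f` has bounded continuous first-order derivatives on `[0,S] × cl Ω`. -/
def C1Bounded {n : ℕ} (Ω : Set (Fin n → ℝ)) (S : ℝ) (f : ℝ → (Fin n → ℝ) → ℝ) : Prop :=
  (∀ t ∈ Icc 0 S, ∀ x ∈ closure Ω, DifferentiableAt ℝ (fun s => f s x) t ∧
    ∀ i, DifferentiableAt ℝ (fun s => f t (Function.update x i s)) (x i)) ∧
  ContinuousOn (fun p : ℝ × (Fin n → ℝ) => f p.1 p.2) (Icc 0 S ×ˢ closure Ω) ∧
  ContinuousOn (fun p : ℝ × (Fin n → ℝ) => timeDeriv f p.1 p.2) (Icc 0 S ×ˢ closure Ω) ∧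
  (∀ i, ContinuousOn (fun p : ℝ × (Fin n → ℝ) => spatialDeriv f i p.1 p.2)
    (Icc 0 S ×ˢ closure Ω)) ∧
  ∃ B, W1infLE Ω S f B

/-- Componentwise bound `‖f‖_* ≤ ε` for the parabolic Schauder norm of
`C([0,S];C^{2+α}(cl Ω)) ∩ C^{1+α/2}([0,S];C(cl Ω))`: sup bounds on `f`, `∂ₜf`, spatial
derivatives up to order 2, the `α`-Hölder (in `x`) seminorms of the second spatial derivatives,
and the `α/2`-Hölder (in `t`) seminorm of `∂ₜf`. -/
def SchauderLE {n : ℕ} (α : ℝ) (Ω : Set (Fin n → ℝ)) (S : ℝ) (f : ℝ → (Fin n → ℝ) → ℝ)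
    (ε : ℝ) : Prop :=
  (∀ t ∈ Icc 0 S, ∀ x ∈ closure Ω,
    |f t x| ≤ ε ∧ |timeDeriv f t x| ≤ ε ∧ (∀ i, |spatialDeriv f i t x| ≤ ε) ∧
    ∀ i j, |spatialDeriv2 f i j t x| ≤ ε) ∧
  (∀ t ∈ Icc 0 S, ∀ x ∈ closure Ω, ∀ x' ∈ closure Ω, ∀ i j,
    |spatialDeriv2 f i j t x - spatialDeriv2 f i j t x'| ≤ ε * dist x x' ^ α) ∧
  (∀ x ∈ closure Ω, ∀ t ∈ Icc 0 S, ∀ t' ∈ Icc 0 S,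
    |timeDeriv f t x - timeDeriv f t' x| ≤ ε * |t - t'| ^ (α / 2))

/-- `G`, `∂ₜG` and the `∂_{xᵢ}G` exist and are continuous on `[0,S] × cl Ω × ℝ`. -/
def C1InTX {n : ℕ} (Ω : Set (Fin n → ℝ)) (S : ℝ) (G : ℝ → (Fin n → ℝ) → ℝ → ℝ) : Prop :=
  (∀ t ∈ Icc 0 S, ∀ x ∈ closure Ω, ∀ u : ℝ,
    DifferentiableAt ℝ (fun s => G s x u) t ∧
    ∀ i, DifferentiableAt ℝ (fun s => G t (Function.update x i s) u) (x i)) ∧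
  ContinuousOn (fun p : ℝ × (Fin n → ℝ) × ℝ => G p.1 p.2.1 p.2.2)
    (Icc 0 S ×ˢ closure Ω ×ˢ (univ : Set ℝ)) ∧
  ContinuousOn (fun p : ℝ × (Fin n → ℝ) × ℝ => FtDeriv G p.1 p.2.1 p.2.2)
    (Icc 0 S ×ˢ closure Ω ×ˢ (univ : Set ℝ)) ∧
  ∀ i, ContinuousOn (fun p : ℝ × (Fin n → ℝ) × ℝ => FxDeriv G i p.1 p.2.1 p.2.2)
    (Icc 0 S ×ˢ closure Ω ×ˢ (univ : Set ℝ))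

/-- `G`, `∂ₜG` and the `∂_{xᵢ}G` are bounded by `κ(|u|)` on `[0,S] × cl Ω`, for every `u`. -/
def BoundedByKappa {n : ℕ} (Ω : Set (Fin n → ℝ)) (S : ℝ) (G : ℝ → (Fin n → ℝ) → ℝ → ℝ)
    (κ : ℝ → ℝ) : Prop :=
  ∀ u : ℝ, ∀ t ∈ Icc 0 S, ∀ x ∈ closure Ω,
    |G t x u| ≤ κ |u| ∧ |FtDeriv G t x u| ≤ κ |u| ∧ ∀ i, |FxDeriv G i t x u| ≤ κ |u|

/-- The family of solutions of the semilinear problem with boundary data `λχ`, together with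
its first and second linearizations in the boundary parameter `λ`. -/
structure SemilinearFamily {n : ℕ} (Ω : Set (Fin n → ℝ)) (S r : ℝ)
    (χ : ℝ → (Fin n → ℝ) → ℝ) (F : ℝ → (Fin n → ℝ) → ℝ → ℝ)
    (v v1 v2 : ℝ → ℝ → (Fin n → ℝ) → ℝ) : Prop where
  sol : ∀ lam ∈ Icc (-r) r, IsClassicalSolution Ω S (fun _ _ => (0 : ℝ))
      (fun t x => -F t x (v lam t x)) (fun t x => lam * χ t x) (v lam)
  zero : ∀ t ∈ Icc 0 S, ∀ x ∈ closure Ω, v 0 t x = 0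
  lin1 : ∀ lam ∈ Icc (-r) r, IsClassicalSolution Ω S
      (fun t x => uDeriv F t x (v lam t x)) (fun _ _ => (0 : ℝ)) χ (v1 lam)
  lin2 : ∀ lam ∈ Icc (-r) r, IsClassicalSolution Ω S
      (fun t x => uDeriv F t x (v lam t x))
      (fun t x => -uDeriv2 F t x (v lam t x) * (v1 lam t x) ^ 2) (fun _ _ => (0 : ℝ)) (v2 lam)
  cont_lam : ∀ t ∈ Icc 0 S, ∀ x ∈ closure Ω, ContinuousOn (fun lam => v lam t x) (Icc (-r) r)
  deriv1 : ∀ t ∈ Icc 0 S, ∀ x ∈ closure Ω, ∀ lam ∈ Ioo (-r) r,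
      HasDerivAt (fun μ => v μ t x) (v1 lam t x) lam
  deriv2 : ∀ t ∈ Icc 0 S, ∀ x ∈ closure Ω, ∀ lam ∈ Ioo (-r) r,
      HasDerivAt (fun μ => v1 μ t x) (v2 lam t x) lam

end

end Paper

open Paper Set

theorem aux_second_deriv_nonneg {f : ℝ → ℝ} {a : ℝ} (hc : ContinuousAt f a)
    (hm : IsLocalMin f a) : 0 ≤ deriv (deriv f) a := by
  by_contra hneg
  push Not at hneg
  have hd : deriv f a = 0 := hm.deriv_eq_zero
  have hmax : IsLocalMax f a := by
    have h1 : deriv (deriv (fun s => -f s)) a > 0 := by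
      have : deriv (fun s => -f s) = fun s => -deriv f s := by
        funext s; simp
      rw [this]; simp; linarith
    have h2 := isLocalMin_of_deriv_deriv_pos h1 (by simp [hd]) hc.neg
    have h3 := h2.neg
    simpa using h3
  have hev : f =ᶠ[nhds a] fun _ => f a := by
    filter_upwards [hm, hmax] with s h1 h2
    exact le_antisymm h2 h1
  have h4 := hev.deriv
  have h5 := h4.deriv_eq
  simp at h5
  linarith

theorem aux_spatialDeriv_update {n : ℕ} (u : ℝ → (Fin n → ℝ) → ℝ) (i : Fin n) (t : ℝ)
    (x : Fin n → ℝ) (s : ℝ) : spatialDeriv u i t (Function.update x i s)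
      = deriv (fun s' => u t (Function.update x i s')) s := by
  simp [spatialDeriv]

theorem aux_sd2 {n : ℕ} (u : ℝ → (Fin n → ℝ) → ℝ) (i : Fin n) (t : ℝ)
    (x : Fin n → ℝ) : spatialDeriv2 u i i t x
      = deriv (deriv (fun s' => u t (Function.update x i s'))) (x i) := by
  unfold spatialDeriv2
  rw [spatialDeriv]
  congr 1
  funext s
  exact aux_spatialDeriv_update u i t x s

structure WReg {n : ℕ} (Ω : Set (Fin n → ℝ)) (S : ℝ) (u : ℝ → (Fin n → ℝ) → ℝ) : Prop where
  cont : ContinuousOn (fun p : ℝ × (Fin n → ℝ) => u p.1 p.2) (Icc 0 S ×ˢ closure Ω)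
  diff_t : ∀ t ∈ Ioo 0 S, ∀ x ∈ Ω, DifferentiableAt ℝ (fun s => u s x) t
  diff_x : ∀ t ∈ Ioo 0 S, ∀ x ∈ Ω, ∀ i,
    DifferentiableAt ℝ (fun s => u t (Function.update x i s)) (x i)
  diff_xx : ∀ t ∈ Ioo 0 S, ∀ x ∈ Ω, ∀ i,
    DifferentiableAt ℝ (fun s => spatialDeriv u i t (Function.update x i s)) (x i)

theorem aux_wreg {n : ℕ} {Ω : Set (Fin n → ℝ)} {S : ℝ} {u : ℝ → (Fin n → ℝ) → ℝ}
    (h : ParabolicRegular Ω S u) : WReg Ω S u :=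
  ⟨h.cont, h.diff_t, h.diff_x, fun t ht x hx i => h.diff_xx t ht x hx i i⟩

theorem aux_update_ev {n : ℕ} {Ω : Set (Fin n → ℝ)} (hΩ : IsOpen Ω) {x : Fin n → ℝ}
    (hx : x ∈ Ω) (i : Fin n) : ∀ᶠ s in nhds (x i), Function.update x i s ∈ Ω := by
  have hc : Continuous (fun s : ℝ => Function.update x i s) := continuous_const.update i continuous_id
  have := hc.continuousAt (x := x i)
  apply this
  simp only [Function.update_eq_self]
  exact hΩ.mem_nhds hx

theorem aux_sub_sd {n : ℕ} {Ω : Set (Fin n → ℝ)} {S : ℝ} {u w : ℝ → (Fin n → ℝ) → ℝ}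
    (hu : WReg Ω S u) (hw : WReg Ω S w) {t : ℝ} (ht : t ∈ Ioo 0 S) {x : Fin n → ℝ}
    (hx : x ∈ Ω) (i : Fin n) :
    spatialDeriv (fun t x => u t x - w t x) i t x = spatialDeriv u i t x - spatialDeriv w i t x := by
  unfold spatialDeriv
  exact deriv_fun_sub (hu.diff_x t ht x hx i) (hw.diff_x t ht x hx i)

theorem aux_sub_sd_ev {n : ℕ} {Ω : Set (Fin n → ℝ)} (hΩ : IsOpen Ω) {S : ℝ}
    {u w : ℝ → (Fin n → ℝ) → ℝ}
    (hu : WReg Ω S u) (hw : WReg Ω S w) {t : ℝ} (ht : t ∈ Ioo 0 S) {x : Fin n → ℝ}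
    (hx : x ∈ Ω) (i : Fin n) :
    (fun s => spatialDeriv (fun t x => u t x - w t x) i t (Function.update x i s))
      =ᶠ[nhds (x i)] fun s => spatialDeriv u i t (Function.update x i s)
        - spatialDeriv w i t (Function.update x i s) := by
  filter_upwards [aux_update_ev hΩ hx i] with s hs
  exact aux_sub_sd hu hw ht hs i

theorem aux_wreg_sub {n : ℕ} {Ω : Set (Fin n → ℝ)} (hΩ : IsOpen Ω) {S : ℝ}
    {u w : ℝ → (Fin n → ℝ) → ℝ} (hu : WReg Ω S u) (hw : WReg Ω S w) :
    WReg Ω S (fun t x => u t x - w t x) := by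
  refine ⟨hu.cont.sub hw.cont, fun t ht x hx => (hu.diff_t t ht x hx).sub (hw.diff_t t ht x hx),
    fun t ht x hx i => (hu.diff_x t ht x hx i).sub (hw.diff_x t ht x hx i), ?_⟩
  intro t ht x hx i
  exact ((hu.diff_xx t ht x hx i).sub (hw.diff_xx t ht x hx i)).congr_of_eventuallyEq
    (aux_sub_sd_ev hΩ hu hw ht hx i)

theorem aux_sub_lap {n : ℕ} {Ω : Set (Fin n → ℝ)} (hΩ : IsOpen Ω) {S : ℝ}
    {u w : ℝ → (Fin n → ℝ) → ℝ} (hu : WReg Ω S u) (hw : WReg Ω S w)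
    {t : ℝ} (ht : t ∈ Ioo 0 S) {x : Fin n → ℝ} (hx : x ∈ Ω) :
    laplacian (fun t x => u t x - w t x) t x = laplacian u t x - laplacian w t x := by
  unfold laplacian
  rw [← Finset.sum_sub_distrib]
  refine Finset.sum_congr rfl fun i _ => ?_
  unfold spatialDeriv2
  rw [spatialDeriv, (aux_sub_sd_ev hΩ hu hw ht hx i).deriv_eq,
    deriv_fun_sub (hu.diff_xx t ht x hx i) (hw.diff_xx t ht x hx i)]
  rfl

theorem aux_sub_time {n : ℕ} {Ω : Set (Fin n → ℝ)} {S : ℝ}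
    {u w : ℝ → (Fin n → ℝ) → ℝ} (hu : WReg Ω S u) (hw : WReg Ω S w)
    {t : ℝ} (ht : t ∈ Ioo 0 S) {x : Fin n → ℝ} (hx : x ∈ Ω) :
    timeDeriv (fun t x => u t x - w t x) t x = timeDeriv u t x - timeDeriv w t x := by
  unfold timeDeriv
  exact deriv_fun_sub (hu.diff_t t ht x hx) (hw.diff_t t ht x hx)

theorem aux_left_min {g : ℝ → ℝ} {a t d : ℝ} (hat : a < t) (hg : HasDerivAt g d t)
    (hmin : ∀ s ∈ Icc a t, g t ≤ g s) : d ≤ 0 := by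
  by_contra hd
  push Not at hd
  have h1 := (hasDerivAt_iff_tendsto_slope.1 hg).mono_left
    (nhdsWithin_mono t (fun s (hs : s ∈ Iio t) => ne_of_lt hs))
  have h2 : ∀ᶠ s in nhdsWithin t (Iio t), 0 < slope g t s := h1.eventually (lt_mem_nhds hd)
  have h3 : ∀ᶠ s in nhdsWithin t (Iio t), s ∈ Ioo a t := Ioo_mem_nhdsLT hat
  obtain ⟨s, hs1, hs2⟩ := (h2.and h3).exists
  have := hmin s ⟨hs2.1.le, hs2.2.le⟩
  rw [slope_def_field] at hs1
  have : (g s - g t) / (s - t) ≤ 0 := div_nonpos_of_nonneg_of_nonpos (by linarith) (by linarith [hs2.2])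
  linarith

theorem aux_wmp {n : ℕ} {Ω : Set (Fin n → ℝ)} (hΩ : IsOpen Ω) (hΩb : Bornology.IsBounded Ω)
    {S a μ : ℝ} (ha : 0 ≤ a) (haS : a < S) {u : ℝ → (Fin n → ℝ) → ℝ} (hu : WReg Ω S u)
    (heq : ∀ t ∈ Ioo a S, ∀ x ∈ Ω, u t x < 0 → μ * u t x < timeDeriv u t x - laplacian u t x)
    (hlat : ∀ t ∈ Icc a S, ∀ x ∈ frontier Ω, 0 ≤ u t x)
    (hini : ∀ x ∈ closure Ω, 0 ≤ u a x) :
    ∀ t ∈ Icc a S, ∀ x ∈ closure Ω, 0 ≤ u t x := by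
  have hcpt : IsCompact (closure Ω) := hΩb.isCompact_closure
  have main : ∀ b ∈ Ioo a S, ∀ x ∈ closure Ω, 0 ≤ u b x := by
    intro b hb x hx
    by_contra hneg
    push Not at hneg
    have hc : ContinuousOn (fun p : ℝ × (Fin n → ℝ) => Real.exp (-μ * p.1) * u p.1 p.2)
        (Icc a b ×ˢ closure Ω) := by
      refine ContinuousOn.mul (by fun_prop) (hu.cont.mono ?_)
      exact prod_mono (Icc_subset_Icc ha hb.2.le) subset_rfl
    obtain ⟨⟨t, z⟩, ⟨ht, hz⟩, hmin⟩ := (isCompact_Icc.prod hcpt).exists_isMinOn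
      ⟨(b, x), ⟨hb.1.le, le_rfl⟩, hx⟩ hc
    simp only at ht hz
    have hmin' : ∀ t' ∈ Icc a b, ∀ x' ∈ closure Ω,
        Real.exp (-μ * t) * u t z ≤ Real.exp (-μ * t') * u t' x' :=
      fun t' ht' x' hx' => hmin (show (t', x') ∈ Icc a b ×ˢ closure Ω from ⟨ht', hx'⟩)
    have hneg' : u t z < 0 := by
      have h1 := hmin' b ⟨hb.1.le, le_rfl⟩ x hx
      have h2 := mul_neg_of_pos_of_neg (Real.exp_pos (-μ * b)) hneg
      by_contra h3
      push Not at h3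
      have := mul_nonneg (Real.exp_pos (-μ * t)).le h3
      linarith
    have hta : a < t := by
      rcases eq_or_lt_of_le ht.1 with h | h
      · rw [← h] at hneg'; linarith [hini z hz]
      · exact h
    have htS : t < S := lt_of_le_of_lt ht.2 hb.2
    have hzΩ : z ∈ Ω := by
      by_contra h
      have : z ∈ frontier Ω := by
        rw [frontier, hΩ.interior_eq]; exact ⟨hz, h⟩
      linarith [hlat t ⟨hta.le, htS.le⟩ z this]
    have ht0 : t ∈ Ioo 0 S := ⟨lt_of_le_of_lt ha hta, htS⟩
    have hlap : 0 ≤ laplacian u t z := by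
      refine Finset.sum_nonneg fun i _ => ?_
      rw [aux_sd2]
      refine aux_second_deriv_nonneg (hu.diff_x t ht0 z hzΩ i).continuousAt ?_
      filter_upwards [aux_update_ev hΩ hzΩ i] with s hs
      simp only [Function.update_eq_self]
      exact le_of_mul_le_mul_left (hmin' t ht _ (subset_closure hs)) (Real.exp_pos _)
    have htime : timeDeriv u t z ≤ μ * u t z := by
      have h1 : HasDerivAt (fun s => u s z) (timeDeriv u t z) t :=
        (hu.diff_t t ht0 z hzΩ).hasDerivAt
      have h2 : HasDerivAt (fun s : ℝ => Real.exp (-μ * s)) (Real.exp (-μ * t) * (-μ * 1)) t :=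
        ((hasDerivAt_id t).const_mul (-μ)).exp
      have h3 := aux_left_min hta (h2.mul h1)
        (fun s hs => hmin' s ⟨hs.1, hs.2.trans ht.2⟩ z hz)
      have h4 : Real.exp (-μ * t) * (timeDeriv u t z - μ * u t z) ≤ 0 := by linarith
      have h5 := nonpos_of_mul_nonpos_right h4 (Real.exp_pos _)
      linarith
    have := heq t ⟨hta, htS⟩ z hzΩ hneg'
    linarith
  intro t ht x hx
  rcases eq_or_lt_of_le ht.1 with h | h
  · rw [← h]; exact hini x hx
  rcases eq_or_lt_of_le ht.2 with h' | h'
  · subst h'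
    have hc : ContinuousWithinAt (fun s => u s x) (Icc 0 t) t := by
      have h1 := hu.cont (t, x) ⟨⟨ha.trans h.le, le_rfl⟩, hx⟩
      exact h1.comp (f := fun s : ℝ => (s, x)) (t := Icc 0 t ×ˢ closure Ω)
        (by fun_prop) (fun s hs => ⟨hs, hx⟩)
    have hc2 : Filter.Tendsto (fun s => u s x) (nhdsWithin t (Ioo a t)) (nhds (u t x)) :=
      hc.mono_left (nhdsWithin_mono t (fun s hs => ⟨ha.trans hs.1.le, hs.2.le⟩))
    have : (nhdsWithin t (Ioo a t)).NeBot := by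
      rw [nhdsWithin_Ioo_eq_nhdsLT h]; infer_instance
    refine ge_of_tendsto hc2 ?_
    filter_upwards [self_mem_nhdsWithin] with s hs
    exact main s hs x hx
  · exact main t ⟨h, h'⟩ x hx

/-- explicit barrier -/
noncomputable def barr {n : ℕ} (i0 : Fin n) (κ L β m t0 : ℝ) (t : ℝ) (x : Fin n → ℝ) : ℝ :=
  m * (Real.exp (-κ * (t - t0)) * (Real.exp (L ^ 2 * (t - t0) - L * x i0) - β))

theorem aux_barr_sd {n : ℕ} (i0 : Fin n) (κ L β m t0 : ℝ) (i : Fin n) (t : ℝ) (x : Fin n → ℝ) :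
    spatialDeriv (barr i0 κ L β m t0) i t x = if i = i0 then
      -L * (m * (Real.exp (-κ * (t - t0)) * Real.exp (L ^ 2 * (t - t0) - L * x i0))) else 0 := by
  unfold spatialDeriv barr
  split_ifs with h
  · subst h
    simp only [Function.update_self]
    have h1 : HasDerivAt (fun s : ℝ => L ^ 2 * (t - t0) - L * s) (-(L * 1)) (x i) :=
      ((hasDerivAt_id (x i)).const_mul L).const_sub _
    have h2 := (((h1.exp.sub_const β).const_mul (Real.exp (-κ * (t - t0)))).const_mul m).deriv
    rw [h2]; ring
  · simp [Function.update_of_ne (Ne.symm h)]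

theorem aux_barr_sd2 {n : ℕ} (i0 : Fin n) (κ L β m t0 : ℝ) (i : Fin n) (t : ℝ) (x : Fin n → ℝ) :
    HasDerivAt (fun s => spatialDeriv (barr i0 κ L β m t0) i t (Function.update x i s))
     (if i = i0 then
      L ^ 2 * (m * (Real.exp (-κ * (t - t0)) * Real.exp (L ^ 2 * (t - t0) - L * x i0))) else 0)
      (x i) := by
  simp only [aux_barr_sd]
  split_ifs with h
  · subst h
    simp only [Function.update_self]
    have h1 : HasDerivAt (fun s : ℝ => L ^ 2 * (t - t0) - L * s) (-(L * 1)) (x i) :=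
      ((hasDerivAt_id (x i)).const_mul L).const_sub _
    have h2 := (((h1.exp).const_mul (Real.exp (-κ * (t - t0)))).const_mul m).const_mul (-L)
    refine h2.congr_deriv ?_
    ring
  · exact hasDerivAt_const _ _

theorem aux_barr_wreg {n : ℕ} (i0 : Fin n) (κ L β m t0 : ℝ) (Ω : Set (Fin n → ℝ)) (S : ℝ) :
    WReg Ω S (barr i0 κ L β m t0) := by
  refine ⟨?_, ?_, ?_, fun t _ x _ i => (aux_barr_sd2 i0 κ L β m t0 i t x).differentiableAt⟩
  · unfold barr; fun_prop
  · intro t _ x _; unfold barr; fun_prop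
  · intro t _ x _ i
    unfold barr
    by_cases h : i = i0
    · subst h
      simp only [Function.update_self]; fun_prop
    · simp only [Function.update_of_ne (Ne.symm h)]; fun_prop

theorem aux_barr_eq {n : ℕ} (i0 : Fin n) (κ L β m t0 : ℝ) (t : ℝ) (x : Fin n → ℝ) :
    timeDeriv (barr i0 κ L β m t0) t x - laplacian (barr i0 κ L β m t0) t x
      = -κ * barr i0 κ L β m t0 t x := by
  have hl : laplacian (barr i0 κ L β m t0) t x =
      L ^ 2 * (m * (Real.exp (-κ * (t - t0)) * Real.exp (L ^ 2 * (t - t0) - L * x i0))) := by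
    unfold laplacian spatialDeriv2
    have : ∀ i, spatialDeriv (spatialDeriv (barr i0 κ L β m t0) i) i t x = if i = i0 then
      L ^ 2 * (m * (Real.exp (-κ * (t - t0)) * Real.exp (L ^ 2 * (t - t0) - L * x i0))) else 0 :=
      fun i => (aux_barr_sd2 i0 κ L β m t0 i t x).deriv
    simp [this]
  have ht : timeDeriv (barr i0 κ L β m t0) t x =
      m * (Real.exp (-κ * (t - t0)) * (-κ) * (Real.exp (L ^ 2 * (t - t0) - L * x i0) - β)
        + Real.exp (-κ * (t - t0)) * (Real.exp (L ^ 2 * (t - t0) - L * x i0) * L ^ 2)) := by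
    unfold timeDeriv barr
    have h0 : HasDerivAt (fun s : ℝ => s - t0) 1 t := (hasDerivAt_id t).sub_const t0
    have h1 := (h0.const_mul (-κ)).exp
    have h2 := (((h0.const_mul (L ^ 2)).sub_const (L * x i0)).exp).sub_const β
    have h3 := ((h1.mul h2).const_mul m).deriv
    refine h3.trans ?_
    ring
  rw [hl, ht]; unfold barr; ring

theorem aux_y_nonneg {n : ℕ} {Ω : Set (Fin n → ℝ)} (hΩ : IsOpen Ω) (hΩb : Bornology.IsBounded Ω)
    {S C : ℝ} (hS : 0 < S) {c χ u : ℝ → (Fin n → ℝ) → ℝ}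
    (hC : ∀ t ∈ Icc 0 S, ∀ x ∈ closure Ω, -C ≤ c t x)
    (hχ0 : ∀ t ∈ Icc 0 S, ∀ x ∈ frontier Ω, 0 ≤ χ t x)
    (hu : IsClassicalSolution Ω S c (fun _ _ => (0 : ℝ)) χ u) :
    ∀ t ∈ Icc 0 S, ∀ x ∈ closure Ω, 0 ≤ u t x := by
  refine aux_wmp hΩ hΩb (μ := C + 1) le_rfl hS (aux_wreg hu.toParabolicRegular) ?_ ?_ ?_
  · intro t ht x hx hneg
    have h1 := hu.eqn t ht x hx
    have h2 := hC t ⟨ht.1.le, ht.2.le⟩ x (subset_closure hx)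
    nlinarith
  · intro t ht x hx
    rw [hu.lateral t ht x hx]; exact hχ0 t ht x hx
  · intro x hx
    rw [hu.initial x hx]

theorem aux_compare {n : ℕ} {Ω : Set (Fin n → ℝ)} (hΩ : IsOpen Ω) (hΩb : Bornology.IsBounded Ω)
    {S κ : ℝ} (hS : 0 < S) {c χ u y : ℝ → (Fin n → ℝ) → ℝ}
    (hc : ∀ t ∈ Icc 0 S, ∀ x ∈ closure Ω, c t x ≤ κ)
    (hu : IsClassicalSolution Ω S c (fun _ _ => (0 : ℝ)) χ u)
    (hu0 : ∀ t ∈ Icc 0 S, ∀ x ∈ closure Ω, 0 ≤ u t x)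
    (hy : IsClassicalSolution Ω S (fun _ _ => κ) (fun _ _ => (0 : ℝ)) χ y) :
    ∀ t ∈ Icc 0 S, ∀ x ∈ closure Ω, y t x ≤ u t x := by
  have hwu := aux_wreg hu.toParabolicRegular
  have hwy := aux_wreg hy.toParabolicRegular
  have key := aux_wmp hΩ hΩb (μ := -κ + 1) le_rfl hS (aux_wreg_sub hΩ hwu hwy) ?_ ?_ ?_
  · intro t ht x hx
    linarith [key t ht x hx]
  · intro t ht x hx hneg
    rw [aux_sub_lap hΩ hwu hwy ht hx, aux_sub_time hwu hwy ht hx]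
    have h1 := hu.eqn t ht x hx
    have h2 := hy.eqn t ht x hx
    have ht' : t ∈ Icc 0 S := ⟨ht.1.le, ht.2.le⟩
    have h3 := mul_le_mul_of_nonneg_right (hc t ht' x (subset_closure hx))
      (hu0 t ht' x (subset_closure hx))
    nlinarith
  · intro t ht x hx
    rw [hu.lateral t ht x hx, hy.lateral t ht x hx]; simp
  · intro x hx
    rw [hu.initial x hx, hy.initial x hx]; simp

theorem aux_y_pos {n : ℕ} (hn : 2 ≤ n) {Ω : Set (Fin n → ℝ)} (hΩ : IsOpen Ω)
    (hΩb : Bornology.IsBounded Ω)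
    {S δ₁ δ₂ κ : ℝ} (hδ₁ : 0 < δ₁) (hδ₁S : δ₁ < S) (hδ₂ : 0 < δ₂) (hκ : 0 ≤ κ)
    {χ y : ℝ → (Fin n → ℝ) → ℝ}
    (hχc : ContinuousOn (fun p : ℝ × (Fin n → ℝ) => χ p.1 p.2) (Icc 0 S ×ˢ frontier Ω))
    (hχ0 : ∀ t ∈ Icc 0 S, ∀ x ∈ frontier Ω, 0 ≤ χ t x)
    (hχδ : ∀ t ∈ Icc δ₁ S, ∀ x ∈ frontier Ω, χ t x = δ₂)
    (hy : IsClassicalSolution Ω S (fun _ _ => κ) (fun _ _ => (0 : ℝ)) χ y) :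
    ∀ t ∈ Icc δ₁ S, ∀ x ∈ closure Ω, 0 < y t x := by
  have hS : 0 < S := hδ₁.trans hδ₁S
  have hcpt : IsCompact (closure Ω) := hΩb.isCompact_closure
  have hfr : IsCompact (frontier Ω) :=
    hcpt.of_isClosed_subset isClosed_frontier frontier_subset_closure
  have hy0 := aux_y_nonneg hΩ hΩb hS (C := 0) (by intros; simpa using hκ) hχ0 hy
  -- lower bound of the lateral data slightly before `δ₁`
  obtain ⟨η, hη, hηδ, hlow⟩ : ∃ η, 0 < η ∧ η < δ₁ ∧ ∀ t ∈ Icc (δ₁ - η) S, ∀ x ∈ frontier Ω,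
      δ₂ / 2 ≤ χ t x := by
    have huc := (isCompact_Icc.prod hfr).uniformContinuousOn_of_continuous hχc
    obtain ⟨e, he, h⟩ := Metric.uniformContinuousOn_iff.1 huc (δ₂ / 2) (by linarith)
    refine ⟨min δ₁ e / 2, by positivity, by linarith [min_le_left δ₁ e], ?_⟩
    intro t ht x hx
    rcases le_total δ₁ t with h1 | h1
    · rw [hχδ t ⟨h1, ht.2⟩ x hx]; linarith
    · have h2 := h (t, x) ⟨⟨by linarith [ht.1, min_le_left δ₁ e], ht.2⟩, hx⟩ (δ₁, x)
        ⟨⟨hδ₁.le, hδ₁S.le⟩, hx⟩ (by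
          rw [Prod.dist_eq, dist_self, max_lt_iff, Real.dist_eq, abs_lt]
          refine ⟨⟨?_, ?_⟩, he⟩ <;> linarith [ht.1, min_le_right δ₁ e])
      simp only at h2
      rw [hχδ δ₁ ⟨le_rfl, hδ₁S.le⟩ x hx, Real.dist_eq, abs_lt] at h2
      linarith [h2.1]
  obtain ⟨R, hR⟩ := hcpt.isBounded.exists_norm_le
  let i0 : Fin n := ⟨0, by lia⟩
  have hRi : ∀ x ∈ closure Ω, |x i0| ≤ max R 1 := fun x hx =>
    ((norm_le_pi_norm x i0).trans (hR x hx)).trans (le_max_left _ _)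
  set Q := max R 1 with hQ
  have hQ1 : 1 ≤ Q := le_max_right _ _
  obtain ⟨L, hL0, hL⟩ : ∃ L : ℝ, 0 < L ∧ 2 * Q < L * η := by
    refine ⟨(2 * Q + 1) / η, by positivity, ?_⟩
    rw [div_mul_cancel₀ _ hη.ne']; linarith
  set t0 := δ₁ - η with ht0
  have ht0pos : 0 ≤ t0 := by linarith
  have ht0S : t0 < S := by linarith
  set B := Real.exp (L ^ 2 * S + L * Q) with hB
  have hBpos : 0 < B := Real.exp_pos _
  set m := δ₂ / 2 / B with hm
  have hmpos : 0 < m := by positivity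
  set φ := barr i0 κ L (Real.exp (L * Q)) m t0 with hφ
  have hwy := aux_wreg hy.toParabolicRegular
  have hwφ : WReg Ω S φ := aux_barr_wreg _ _ _ _ _ _ _ _
  have key := aux_wmp hΩ hΩb (μ := -κ + 1) ht0pos ht0S (aux_wreg_sub hΩ hwy hwφ) ?_ ?_ ?_
  · intro t ht x hx
    have h1 := key t ⟨by linarith [ht.1], ht.2⟩ x hx
    have h2 : 0 < φ t x := by
      rw [hφ, barr]
      refine mul_pos hmpos (mul_pos (Real.exp_pos _) (sub_pos.2 (Real.exp_lt_exp.2 ?_)))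
      have h3 := (abs_le.1 (hRi x hx)).2
      have h4 : η ≤ t - t0 := by linarith [ht.1]
      have h5 : L * x i0 ≤ L * Q := mul_le_mul_of_nonneg_left h3 hL0.le
      have h6 : L ^ 2 * η ≤ L ^ 2 * (t - t0) := mul_le_mul_of_nonneg_left h4 (by positivity)
      have h7 : L * (2 * Q) < L * (L * η) := mul_lt_mul_of_pos_left hL hL0
      nlinarith
    linarith
  · intro t ht x hx hneg
    have ht' : t ∈ Ioo 0 S := ⟨lt_of_le_of_lt ht0pos ht.1, ht.2⟩
    rw [aux_sub_lap hΩ hwy hwφ ht' hx, aux_sub_time hwy hwφ ht' hx]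
    have h1 := hy.eqn t ht' x hx
    have h2 : timeDeriv φ t x - laplacian φ t x = -κ * φ t x := aux_barr_eq _ _ _ _ _ _ _ _
    nlinarith
  · intro t ht x hx
    have h1 := hlow t ht x hx
    rw [hy.lateral t ⟨ht0pos.trans ht.1, ht.2⟩ x hx]
    have h2 : φ t x ≤ m * B := by
      rw [hφ, barr]
      refine mul_le_mul_of_nonneg_left ?_ hmpos.le
      have h3 := (abs_le.1 (hRi x (frontier_subset_closure hx))).1
      have h4 : Real.exp (-κ * (t - t0)) ≤ 1 := by
        rw [Real.exp_le_one_iff]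
        nlinarith [mul_nonneg hκ (sub_nonneg.2 ht.1)]
      have h5 : Real.exp (L ^ 2 * (t - t0) - L * x i0) ≤ B := by
        rw [hB, Real.exp_le_exp]
        have h6 : L ^ 2 * (t - t0) ≤ L ^ 2 * S :=
          mul_le_mul_of_nonneg_left (by linarith [ht.2]) (by positivity)
        nlinarith
      calc Real.exp (-κ * (t - t0)) * (Real.exp (L ^ 2 * (t - t0) - L * x i0) - Real.exp (L * Q))
          ≤ Real.exp (-κ * (t - t0)) * B :=
            mul_le_mul_of_nonneg_left (by linarith [Real.exp_pos (L * Q)]) (Real.exp_pos _).le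
        _ ≤ 1 * B := mul_le_mul_of_nonneg_right h4 hBpos.le
        _ = B := one_mul B
    have h3 : m * B = δ₂ / 2 := by rw [hm]; field_simp
    linarith
  · intro x hx
    have h1 := hy0 t0 ⟨ht0pos, ht0S.le⟩ x hx
    have h2 : φ t0 x ≤ 0 := by
      rw [hφ, barr]
      refine mul_nonpos_of_nonneg_of_nonpos hmpos.le
        (mul_nonpos_of_nonneg_of_nonpos (Real.exp_pos _).le (sub_nonpos.2 (Real.exp_le_exp.2 ?_)))
      have h3 := (abs_le.1 (hRi x hx)).1
      nlinarith
    linarith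

/-- mean value inequality from `0` -/
theorem aux_mvt {r C : ℝ} (hr : 0 < r) {g g' : ℝ → ℝ} (hc : ContinuousOn g (Icc (-r) r))
    (h0 : g 0 = 0)
    (hd : ∀ l ∈ Ioo (-r) r, HasDerivAt g (g' l) l) (hb : ∀ l ∈ Ioo (-r) r, |g' l| ≤ C)
    (hC : 0 ≤ C) {l : ℝ} (hl : l ∈ Icc (-r) r) : |g l| ≤ r * C := by
  rcases lt_trichotomy l 0 with h | h | h
  · obtain ⟨c, hc1, hc2⟩ := exists_hasDerivAt_eq_slope g g' h
      (hc.mono (Icc_subset_Icc hl.1 hr.le))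
      (fun x hx => hd x ⟨by linarith [hl.1, hx.1], by linarith [hx.2]⟩)
    have h1 := hb c ⟨by linarith [hl.1, hc1.1], by linarith [hc1.2]⟩
    rw [h0, eq_div_iff (by linarith)] at hc2
    have : |g l| = |g' c| * |0 - l| := by rw [← abs_mul, hc2]; simp
    rw [this, mul_comm r]
    exact mul_le_mul h1 (by rw [abs_of_pos (by linarith)]; linarith [hl.1]) (abs_nonneg _) hC
  · rw [h, h0, abs_zero]; positivity
  · obtain ⟨c, hc1, hc2⟩ := exists_hasDerivAt_eq_slope g g' h
      (hc.mono (Icc_subset_Icc (by linarith) hl.2))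
      (fun x hx => hd x ⟨by linarith [hx.1], by linarith [hl.2, hx.2]⟩)
    have h1 := hb c ⟨by linarith [hc1.1], by linarith [hl.2, hc1.2]⟩
    rw [h0, eq_div_iff (by linarith)] at hc2
    have : |g l| = |g' c| * |l - 0| := by rw [← abs_mul, hc2]; simp
    rw [this, mul_comm r]
    exact mul_le_mul h1 (by rw [abs_of_pos (by linarith)]; linarith [hl.2]) (abs_nonneg _) hC

/-- lower growth bound at the endpoints -/
theorem aux_mvt_low {r A : ℝ} (hr : 0 < r) {g g' : ℝ → ℝ} (hc : ContinuousOn g (Icc (-r) r))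
    (h0 : g 0 = 0)
    (hd : ∀ l ∈ Ioo (-r) r, HasDerivAt g (g' l) l) (hb : ∀ l ∈ Ioo (-r) r, A ≤ g' l) :
    A * r ≤ g r ∧ g (-r) ≤ -(A * r) := by
  constructor
  · obtain ⟨c, hc1, hc2⟩ := exists_hasDerivAt_eq_slope g g' hr
      (hc.mono (Icc_subset_Icc (by linarith) le_rfl))
      (fun x hx => hd x ⟨by linarith [hx.1], hx.2⟩)
    have h1 := hb c ⟨by linarith [hc1.1], hc1.2⟩
    rw [h0, eq_div_iff (by linarith)] at hc2
    nlinarith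
  · obtain ⟨c, hc1, hc2⟩ := exists_hasDerivAt_eq_slope g g' (neg_lt_zero.2 hr)
      (hc.mono (Icc_subset_Icc le_rfl hr.le))
      (fun x hx => hd x ⟨hx.1, by linarith [hx.2]⟩)
    have h1 := hb c ⟨hc1.1, by linarith [hc1.2]⟩
    rw [h0, eq_div_iff (by linarith)] at hc2
    nlinarith

theorem aux_conc {g : ℝ → ℝ} (hd : ∀ u, DifferentiableAt ℝ g u) (h1 : ∀ u, 0 ≤ u → deriv g u ≤ 0)
    (h2 : ∀ u, u ≤ 0 → 0 ≤ deriv g u) (u : ℝ) : g u ≤ g 0 := by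
  rcases le_total 0 u with h | h
  · have := antitoneOn_of_deriv_nonpos (convex_Ici (0 : ℝ))
      (fun x _ => (hd x).continuousAt.continuousWithinAt)
      (fun x _ => (hd x).differentiableWithinAt)
      (fun x hx => h1 x (by simpa using (interior_subset hx)))
    exact this (by simp) h h
  · have := monotoneOn_of_deriv_nonneg (convex_Iic (0 : ℝ))
      (fun x _ => (hd x).continuousAt.continuousWithinAt)
      (fun x _ => (hd x).differentiableWithinAt)
      (fun x hx => h2 x (by simpa using (interior_subset hx)))
    exact this h (by simp) h

/-- Theorem 2 in reduced form: under the structural assumptions on `F₁`,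
`F₂` and the two families of solutions and their linearizations, the constant
`a₂ := inf_{[δ₁,S] × cl Ω} y` is strictly positive and
`|F₁(t,x,s) − F₂(t,x,s)| ≤ 2r(Mε₁ + 2Kε₂)` on `(δ₁,S) × Ω × [−a₂r, a₂r]`. -/
theorem statement11 {n : ℕ} (hn : 2 ≤ n) (Ω : Set (Fin n → ℝ)) (hΩo : IsOpen Ω)
    (hΩb : Bornology.IsBounded Ω) (hΩc : IsConnected Ω)
    (S δ₁ δ₂ r κ₀ M K ε₁ ε₂ : ℝ) (hS : 0 < S) (hδ₁ : 0 < δ₁) (hδ₁S : δ₁ < S) (hδ₂ : 0 < δ₂)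
    (hr : 0 < r) (hκ₀ : 0 ≤ κ₀) (hM : 0 < M) (hK : 0 ≤ K) (hε₁ : 0 ≤ ε₁) (hε₂ : 0 ≤ ε₂)
    (χ : ℝ → (Fin n → ℝ) → ℝ)
    (hχc : ContinuousOn (fun p : ℝ × (Fin n → ℝ) => χ p.1 p.2) (Icc 0 S ×ˢ frontier Ω))
    (hχ0 : ∀ t ∈ Icc 0 S, ∀ x ∈ frontier Ω, 0 ≤ χ t x)
    (hχδ : ∀ t ∈ Icc δ₁ S, ∀ x ∈ frontier Ω, χ t x = δ₂)
    (F₁ : ℝ → (Fin n → ℝ) → ℝ → ℝ) (hF₁ : C2InU Ω S F₁)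
    (hF₁0 : ∀ t ∈ Icc 0 S, ∀ x ∈ closure Ω, F₁ t x 0 = 0)
    (hF₁conc : ∀ t ∈ Icc 0 S, ∀ x ∈ closure Ω,
      (∀ u : ℝ, 0 ≤ u → uDeriv2 F₁ t x u ≤ 0) ∧ (∀ u : ℝ, u ≤ 0 → 0 ≤ uDeriv2 F₁ t x u))
    (hF₁κ : ∀ t ∈ Icc 0 S, ∀ x ∈ closure Ω, uDeriv F₁ t x 0 ≤ κ₀)
    (F₂ : ℝ → (Fin n → ℝ) → ℝ → ℝ) (hF₂ : C1InU Ω S F₂)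
    (hF₂0 : ∀ t ∈ Icc 0 S, ∀ x ∈ closure Ω, F₂ t x 0 = 0)
    (hF₂K : ∀ t ∈ Icc 0 S, ∀ x ∈ closure Ω, ∀ u : ℝ, |u| ≤ M → |uDeriv F₂ t x u| ≤ K)
    (v₁ v₂ w₁ w₂ z₁ : ℝ → ℝ → (Fin n → ℝ) → ℝ)
    (hsol1 : ∀ lam ∈ Icc (-r) r, IsClassicalSolution Ω S (fun _ _ => (0 : ℝ))
      (fun t x => -F₁ t x (v₁ lam t x)) (fun t x => lam * χ t x) (v₁ lam))
    (hlin1 : ∀ lam ∈ Icc (-r) r, IsClassicalSolution Ω S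
      (fun t x => uDeriv F₁ t x (v₁ lam t x)) (fun _ _ => (0 : ℝ)) χ (w₁ lam))
    (hlin2 : ∀ lam ∈ Icc (-r) r, IsClassicalSolution Ω S
      (fun t x => uDeriv F₁ t x (v₁ lam t x))
      (fun t x => -uDeriv2 F₁ t x (v₁ lam t x) * (w₁ lam t x) ^ 2)
      (fun _ _ => (0 : ℝ)) (z₁ lam))
    (hzero : ∀ t ∈ Icc 0 S, ∀ x ∈ closure Ω, v₁ 0 t x = 0 ∧ v₂ 0 t x = 0)
    (hcont : ∀ t ∈ Icc 0 S, ∀ x ∈ closure Ω,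
      ContinuousOn (fun lam => v₁ lam t x) (Icc (-r) r) ∧
      ContinuousOn (fun lam => v₂ lam t x) (Icc (-r) r))
    (hderiv : ∀ t ∈ Icc 0 S, ∀ x ∈ closure Ω, ∀ lam ∈ Ioo (-r) r,
      HasDerivAt (fun μ => v₁ μ t x) (w₁ lam t x) lam ∧
      HasDerivAt (fun μ => v₂ μ t x) (w₂ lam t x) lam)
    (hwcont : ∀ t ∈ Icc 0 S, ∀ x ∈ closure Ω,
      ContinuousOn (fun lam => w₁ lam t x) (Ioo (-r) r) ∧
      ContinuousOn (fun lam => w₂ lam t x) (Ioo (-r) r))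
    (hderiv2 : ∀ t ∈ Icc 0 S, ∀ x ∈ closure Ω, ∀ lam ∈ Ioo (-r) r,
      HasDerivAt (fun μ => w₁ μ t x) (z₁ lam t x) lam)
    (hMbd : ∀ lam ∈ Icc (-r) r, ∀ t ∈ Icc 0 S, ∀ x ∈ closure Ω,
      |v₁ lam t x| ≤ M ∧ |v₂ lam t x| ≤ M ∧ |w₁ lam t x| ≤ M)
    (hεbd : ∀ lam ∈ Ioo (-r) r, ∀ t ∈ Icc 0 S, ∀ x ∈ closure Ω,
      |uDeriv F₁ t x (v₁ lam t x) - uDeriv F₂ t x (v₂ lam t x)| ≤ ε₁ ∧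
      |w₁ lam t x - w₂ lam t x| ≤ ε₂)
    (y : ℝ → (Fin n → ℝ) → ℝ)
    (hy : IsClassicalSolution Ω S (fun _ _ => κ₀) (fun _ _ => (0 : ℝ)) χ y) :
    0 < sInf ((fun p : ℝ × (Fin n → ℝ) => y p.1 p.2) '' (Icc δ₁ S ×ˢ closure Ω)) ∧
    ∀ t ∈ Ioo δ₁ S, ∀ x ∈ Ω,
      ∀ s ∈ Icc (-(sInf ((fun p : ℝ × (Fin n → ℝ) => y p.1 p.2) ''
            (Icc δ₁ S ×ˢ closure Ω)) * r))
          (sInf ((fun p : ℝ × (Fin n → ℝ) => y p.1 p.2) '' (Icc δ₁ S ×ˢ closure Ω)) * r),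
        |F₁ t x s - F₂ t x s| ≤ 2 * r * (M * ε₁ + 2 * K * ε₂) := by
  have hcpt : IsCompact (closure Ω) := hΩb.isCompact_closure
  have hypos := aux_y_pos hn hΩo hΩb hδ₁ hδ₁S hδ₂ hκ₀ hχc hχ0 hχδ hy
  obtain ⟨x₀, hx₀⟩ := hΩc.nonempty
  have hcont' : ContinuousOn (fun p : ℝ × (Fin n → ℝ) => y p.1 p.2) (Icc δ₁ S ×ˢ closure Ω) :=
    hy.cont.mono (prod_mono (Icc_subset_Icc hδ₁.le le_rfl) subset_rfl)
  have hK' : IsCompact (Icc δ₁ S ×ˢ closure Ω) := isCompact_Icc.prod hcpt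
  have himg := hK'.image_of_continuousOn hcont'
  have hne : (Icc δ₁ S ×ˢ closure Ω).Nonempty :=
    ⟨(δ₁, x₀), ⟨le_rfl, hδ₁S.le⟩, subset_closure hx₀⟩
  have hmem := himg.sInf_mem (hne.image _)
  have hle : ∀ t ∈ Icc δ₁ S, ∀ x ∈ closure Ω,
      sInf ((fun p : ℝ × (Fin n → ℝ) => y p.1 p.2) '' (Icc δ₁ S ×ˢ closure Ω)) ≤ y t x :=
    fun t ht x hx => csInf_le himg.bddBelow ⟨(t, x), ⟨ht, hx⟩, rfl⟩
  set A := sInf ((fun p : ℝ × (Fin n → ℝ) => y p.1 p.2) '' (Icc δ₁ S ×ˢ closure Ω)) with hA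
  have hApos : 0 < A := by
    obtain ⟨⟨t, x⟩, ⟨ht, hx⟩, h⟩ := hmem
    rw [← h]; exact hypos t ht x hx
  refine ⟨hApos, ?_⟩
  -- the first linearization dominates `y`
  have hdom : ∀ lam ∈ Icc (-r) r, ∀ t ∈ Icc 0 S, ∀ x ∈ closure Ω, y t x ≤ w₁ lam t x := by
    intro lam hlam
    have hVc : ContinuousOn (fun p : ℝ × (Fin n → ℝ) => uDeriv F₁ p.1 p.2 (v₁ lam p.1 p.2))
        (Icc 0 S ×ˢ closure Ω) := by
      have h1 := hF₁.1.2.2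
      have h2 := (hsol1 lam hlam).cont
      exact h1.comp (f := fun p : ℝ × (Fin n → ℝ) => (p.1, p.2, v₁ lam p.1 p.2))
        (continuousOn_fst.prodMk (continuousOn_snd.prodMk h2))
        (fun p hp => ⟨hp.1, hp.2, mem_univ _⟩)
    obtain ⟨C, hC⟩ := (isCompact_Icc.prod hcpt).exists_bound_of_continuousOn hVc
    have hw0 := aux_y_nonneg hΩo hΩb hS (C := C)
      (fun t ht x hx => (abs_le.1 (hC (t, x) ⟨ht, hx⟩)).1) hχ0 (hlin1 lam hlam)
    refine aux_compare hΩo hΩb hS ?_ (hlin1 lam hlam) hw0 hy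
    intro t ht x hx
    refine le_trans ?_ (hF₁κ t ht x hx)
    exact aux_conc (g := uDeriv F₁ t x) (hF₁.2.1 t ht x hx) (hF₁conc t ht x hx).1
      (hF₁conc t ht x hx).2 _
  intro t ht x hx s hs
  have ht' : t ∈ Icc 0 S := ⟨(hδ₁.trans ht.1).le, ht.2.le⟩
  have hx' : x ∈ closure Ω := subset_closure hx
  have hends := aux_mvt_low (A := A) hr (hcont t ht' x hx').1 (hzero t ht' x hx').1
    (fun l hl => (hderiv t ht' x hx' l hl).1)
    (fun l hl => (hle t ⟨ht.1.le, ht.2.le⟩ x hx').trans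
      (hdom l ⟨hl.1.le, hl.2.le⟩ t ht' x hx'))
  obtain ⟨lam, hlam, hlams⟩ : ∃ lam ∈ Icc (-r) r, v₁ lam t x = s :=
    intermediate_value_Icc (by linarith) (hcont t ht' x hx').1
      ⟨hends.2.trans hs.1, hs.2.trans hends.1⟩
  have hdF1 := hF₁.1.2.1 t ht' x hx'
  have hdF2 := hF₂.2.1 t ht' x hx'
  have hcF1 : Continuous (F₁ t x) := continuous_iff_continuousAt.2 fun u => (hdF1 u).continuousAt
  have hcF2 : Continuous (F₂ t x) := continuous_iff_continuousAt.2 fun u => (hdF2 u).continuousAt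
  have e1 : |F₁ t x (v₁ lam t x) - F₂ t x (v₂ lam t x)| ≤ r * (ε₁ * M + K * ε₂) := by
    refine aux_mvt hr (g := fun l => F₁ t x (v₁ l t x) - F₂ t x (v₂ l t x))
      (g' := fun l => uDeriv F₁ t x (v₁ l t x) * w₁ l t x - uDeriv F₂ t x (v₂ l t x) * w₂ l t x)
      ((hcF1.comp_continuousOn (hcont t ht' x hx').1).sub
        (hcF2.comp_continuousOn (hcont t ht' x hx').2)) ?_ ?_ ?_ (by positivity) hlam
    · simp only [(hzero t ht' x hx').1, (hzero t ht' x hx').2, hF₁0 t ht' x hx',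
        hF₂0 t ht' x hx', sub_zero]
    · intro l hl
      exact ((hdF1 _).hasDerivAt.comp l (hderiv t ht' x hx' l hl).1).sub
        ((hdF2 _).hasDerivAt.comp l (hderiv t ht' x hx' l hl).2)
    · intro l hl
      obtain ⟨h1, h2⟩ := hεbd l hl t ht' x hx'
      obtain ⟨h3, h4, h5⟩ := hMbd l ⟨hl.1.le, hl.2.le⟩ t ht' x hx'
      have h6 := hF₂K t ht' x hx' _ h4
      calc |uDeriv F₁ t x (v₁ l t x) * w₁ l t x - uDeriv F₂ t x (v₂ l t x) * w₂ l t x|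
          = |(uDeriv F₁ t x (v₁ l t x) - uDeriv F₂ t x (v₂ l t x)) * w₁ l t x
            + uDeriv F₂ t x (v₂ l t x) * (w₁ l t x - w₂ l t x)| := by ring_nf
        _ ≤ |uDeriv F₁ t x (v₁ l t x) - uDeriv F₂ t x (v₂ l t x)| * |w₁ l t x|
            + |uDeriv F₂ t x (v₂ l t x)| * |w₁ l t x - w₂ l t x| := by
          rw [← abs_mul, ← abs_mul]; exact abs_add_le _ _
        _ ≤ ε₁ * M + K * ε₂ :=
          add_le_add (mul_le_mul h1 h5 (abs_nonneg _) hε₁) (mul_le_mul h6 h2 (abs_nonneg _) hK)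
  have e2 : |v₁ lam t x - v₂ lam t x| ≤ r * ε₂ := by
    refine aux_mvt hr (g := fun l => v₁ l t x - v₂ l t x) (g' := fun l => w₁ l t x - w₂ l t x)
      ((hcont t ht' x hx').1.sub (hcont t ht' x hx').2) ?_ ?_ ?_ hε₂ hlam
    · simp only [(hzero t ht' x hx').1, (hzero t ht' x hx').2, sub_zero]
    · intro l hl
      exact (hderiv t ht' x hx' l hl).1.sub (hderiv t ht' x hx' l hl).2
    · intro l hl
      exact (hεbd l hl t ht' x hx').2
  have e3 : |F₂ t x (v₂ lam t x) - F₂ t x (v₁ lam t x)| ≤ K * |v₂ lam t x - v₁ lam t x| := by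
    obtain ⟨h3, h4, h5⟩ := hMbd lam hlam t ht' x hx'
    have := (convex_Icc (-M) M).norm_image_sub_le_of_norm_deriv_le (f := F₂ t x) (C := K)
      (fun u _ => hdF2 u) (fun u hu => hF₂K t ht' x hx' u (abs_le.2 hu))
      (abs_le.1 h3) (abs_le.1 h4)
    exact this
  rw [abs_sub_comm (v₂ lam t x)] at e3
  rw [← hlams]
  have e4 := abs_sub_le (F₁ t x (v₁ lam t x)) (F₂ t x (v₂ lam t x)) (F₂ t x (v₁ lam t x))
  have e5 := mul_le_mul_of_nonneg_left e2 hK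
  have p1 : 0 ≤ r * (M * ε₁ + 2 * K * ε₂) := by positivity
  linarith
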